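/- Define the sliding variable s(g) = p + λ(q₀q − 1̄) for g = (q,p) ∈ TS³, and let H = {g ∈ TS³ : s(g) = 0}. Then H is a subgroup of (TS³, ·): (i) the identity e = (1̄, 0) belongs to H; (ii) if g = (q,p) ∈ H then g⁻¹ = ((q₀, −q⃗), (p₀, −p⃗)) ∈ H; (iii) if g₁, g₂ ∈ H then g₁ · g₂ ∈ H. -/

import Mathlib

/-!
Under `ℝ⁴ ≅ ℍ` both `Q(x) y` and `W(y) x` are the quaternion product `x y`. In the coordinates
`(q, s)` with `s = p + λ(q₀ q - 1̄)`, the product on `TS³` becomes the multiplication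
`(q₁ + ε s₁)(q₂ + ε s₂) = q₁ q₂ + ε (q₁ s₂ + s₁ q₂)` of dual quaternions: the terms carrying `λ` in
its definition are exactly what this change of coordinates produces. Hence `H = {s = 0}` is the
group of unit quaternions inside the dual quaternions. Tangency is automatic on `H`, because
`qᵀs = qᵀp + λ q₀ (qᵀq - 1)`.
-/

open Matrix

noncomputable section

/-- Cross-product (hat) matrix of a 3-vector: `vecHat v *ᵥ u = v ×₃ u`. -/
def vecHat (v : Fin 3 → ℝ) : Matrix (Fin 3) (Fin 3) ℝ :=
  !![0, -v 2, v 1; v 2, 0, -v 0; -v 1, v 0, 0]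

/-- The 4×3 matrix J(x): first row −x⃗ᵀ, lower 3×3 block x₀I₃ + x⃗^∧. -/
def Jmat (x : Fin 4 → ℝ) : Matrix (Fin 4) (Fin 3) ℝ :=
  Matrix.of fun i j =>
    if h : i = 0 then -x j.succ
    else (x 0 • (1 : Matrix (Fin 3) (Fin 3) ℝ) + vecHat fun k => x k.succ) (i.pred h) j

/-- The 4×3 matrix L(x): first row −x⃗ᵀ, lower 3×3 block x₀I₃ − x⃗^∧. -/
def Lmat (x : Fin 4 → ℝ) : Matrix (Fin 4) (Fin 3) ℝ :=
  Matrix.of fun i j =>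
    if h : i = 0 then -x j.succ
    else (x 0 • (1 : Matrix (Fin 3) (Fin 3) ℝ) - vecHat fun k => x k.succ) (i.pred h) j

/-- The 4×4 matrix Q(x) = [x J(x)] (first column x, remaining columns J(x)). -/
def Qmat (x : Fin 4 → ℝ) : Matrix (Fin 4) (Fin 4) ℝ :=
  Matrix.of fun i j => if h : j = 0 then x i else Jmat x i (j.pred h)

/-- The 4×4 matrix W(x) = [x L(x)] (first column x, remaining columns L(x)). -/
def Wmat (x : Fin 4 → ℝ) : Matrix (Fin 4) (Fin 4) ℝ :=
  Matrix.of fun i j => if h : j = 0 then x i else Lmat x i (j.pred h)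

/-- Euclidean norm on ℝ⁴: ‖x‖ = (xᵀx)^{1/2}. -/
def norm4 (x : Fin 4 → ℝ) : ℝ := Real.sqrt (x ⬝ᵥ x)

/-- The identity quaternion 1̄ = (1,0,0,0) ∈ ℝ⁴. -/
def one4 : Fin 4 → ℝ := ![1, 0, 0, 0]

/-- The binary operation on TS³ from Eq. (12) of the paper (with parameter λ). -/
def gmul (lam : ℝ) (g₁ g₂ : (Fin 4 → ℝ) × (Fin 4 → ℝ)) : (Fin 4 → ℝ) × (Fin 4 → ℝ) :=
  (Qmat g₁.1 *ᵥ g₂.1,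
    Qmat g₁.1 *ᵥ g₂.2 + Wmat g₂.1 *ᵥ g₁.2
      + lam • (Qmat g₁.1 *ᵥ (g₂.1 0 • g₂.1 - one4))
      + lam • (Wmat g₂.1 *ᵥ (g₁.1 0 • g₁.1 - one4))
      - lam • ((Qmat g₁.1 *ᵥ g₂.1) 0 • (Qmat g₁.1 *ᵥ g₂.1) - one4))

/-- Quaternion-style conjugation on ℝ⁴: (x₀, x⃗) ↦ (x₀, −x⃗). -/
def qconj (x : Fin 4 → ℝ) : Fin 4 → ℝ := fun i => if i = 0 then x i else -x i

/-- The sliding variable s(g) = p + λ(q₀q − 1̄). -/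
def sVar (lam : ℝ) (g : (Fin 4 → ℝ) × (Fin 4 → ℝ)) : Fin 4 → ℝ :=
  g.2 + lam • (g.1 0 • g.1 - one4)

/-- Membership in the sliding subgroup H = {g ∈ TS³ : s(g) = 0}. -/
def memH (lam : ℝ) (g : (Fin 4 → ℝ) × (Fin 4 → ℝ)) : Prop :=
  norm4 g.1 = 1 ∧ g.1 ⬝ᵥ g.2 = 0 ∧ sVar lam g = 0

open Quaternion

theorem one4_eq_single : one4 = Pi.single 0 1 := by
  ext i
  fin_cases i <;> simp [one4]

theorem qconj_zero : qconj 0 = 0 := by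
  ext i
  simp [qconj]

/-- The identification of `ℝ⁴` with the quaternions, with `x₀` as the real part. It turns the unit
sphere and the operations `Qmat`, `qconj`, `one4` into the unitary group and its operations. -/
@[simps]
def toQuaternion (x : Fin 4 → ℝ) : ℍ[ℝ] :=
  ⟨x 0, x 1, x 2, x 3⟩

theorem toQuaternion_one4 : toQuaternion one4 = 1 := by
  ext <;> simp [one4_eq_single]

theorem toQuaternion_qconj (x : Fin 4 → ℝ) :
    toQuaternion (qconj x) = star (toQuaternion x) := by
  ext <;> simp [qconj]

theorem Qmat_eq (x : Fin 4 → ℝ) :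
    Qmat x = !![x 0, -x 1, -x 2, -x 3;
                x 1, x 0, -x 3, x 2;
                x 2, x 3, x 0, -x 1;
                x 3, -x 2, x 1, x 0] := by
  ext i j
  fin_cases i <;> fin_cases j <;> simp [Qmat, Jmat, vecHat, Fin.pred, Fin.subNat]

theorem toQuaternion_Qmat_mulVec (x y : Fin 4 → ℝ) :
    toQuaternion (Qmat x *ᵥ y) = toQuaternion x * toQuaternion y := by
  ext <;> simp [Qmat_eq, dotProduct, Fin.sum_univ_four] <;> ring

theorem normSq_toQuaternion (x : Fin 4 → ℝ) : normSq (toQuaternion x) = x ⬝ᵥ x := by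
  simp [normSq_def', dotProduct, Fin.sum_univ_four, sq]

theorem mem_unitary_iff_normSq_eq_one {R : Type*} [CommRing R] {a : ℍ[R]} :
    a ∈ unitary ℍ[R] ↔ normSq a = 1 := by
  rw [Unitary.mem_iff, star_mul_self, self_mul_star, and_self, ← coe_one, coe_inj]

theorem toQuaternion_mem_unitary_iff {x : Fin 4 → ℝ} :
    toQuaternion x ∈ unitary ℍ[ℝ] ↔ norm4 x = 1 := by
  rw [mem_unitary_iff_normSq_eq_one, normSq_toQuaternion, norm4, Real.sqrt_eq_one]

theorem sVar_one4 (lam : ℝ) : sVar lam (one4, 0) = 0 := by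
  simp [sVar, one4_eq_single]

theorem sVar_qconj (lam : ℝ) (q p : Fin 4 → ℝ) :
    sVar lam (qconj q, qconj p) = qconj (sVar lam (q, p)) := by
  ext i
  by_cases hi : i = 0
  · simp [sVar, qconj, hi]
  · have one4_apply : one4 i = 0 := by simp [one4_eq_single, hi]
    simp only [sVar, qconj, Pi.add_apply, Pi.sub_apply, Pi.smul_apply, smul_eq_mul, if_true,
      if_neg hi, one4_apply]
    ring

theorem sVar_gmul (lam : ℝ) (g₁ g₂ : (Fin 4 → ℝ) × (Fin 4 → ℝ)) :
    sVar lam (gmul lam g₁ g₂) = Qmat g₁.1 *ᵥ sVar lam g₂ + Wmat g₂.1 *ᵥ sVar lam g₁ := by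
  simp only [sVar, gmul, mulVec_add, mulVec_smul]
  abel

theorem dotProduct_sVar (lam : ℝ) (g : (Fin 4 → ℝ) × (Fin 4 → ℝ)) :
    g.1 ⬝ᵥ sVar lam g = g.1 ⬝ᵥ g.2 + lam * (g.1 0 * (g.1 ⬝ᵥ g.1 - 1)) := by
  simp only [sVar, one4_eq_single, dotProduct_add, dotProduct_smul, dotProduct_sub,
    dotProduct_single_one, smul_eq_mul]
  ring

theorem memH_iff {lam : ℝ} {g : (Fin 4 → ℝ) × (Fin 4 → ℝ)} :
    memH lam g ↔ toQuaternion g.1 ∈ unitary ℍ[ℝ] ∧ sVar lam g = 0 := by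
  rw [toQuaternion_mem_unitary_iff]
  refine ⟨fun ⟨hq, _, hs⟩ => ⟨hq, hs⟩, fun ⟨hq, hs⟩ => ⟨hq, ?_, hs⟩⟩
  have hqq : g.1 ⬝ᵥ g.1 = 1 := Real.sqrt_eq_one.mp hq
  simpa [hs, hqq] using (dotProduct_sVar lam g).symm

theorem memH_one4 (lam : ℝ) : memH lam (one4, 0) :=
  memH_iff.mpr ⟨toQuaternion_one4 ▸ one_mem _, sVar_one4 lam⟩

theorem memH_qconj {lam : ℝ} {q p : Fin 4 → ℝ} (h : memH lam (q, p)) :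
    memH lam (qconj q, qconj p) := by
  obtain ⟨hq, hs⟩ := memH_iff.mp h
  refine memH_iff.mpr ⟨?_, ?_⟩
  · rw [toQuaternion_qconj]
    exact Unitary.star_mem hq
  · rw [sVar_qconj, hs, qconj_zero]

theorem memH_gmul {lam : ℝ} {g₁ g₂ : (Fin 4 → ℝ) × (Fin 4 → ℝ)} (h₁ : memH lam g₁)
    (h₂ : memH lam g₂) : memH lam (gmul lam g₁ g₂) := by
  obtain ⟨hq₁, hs₁⟩ := memH_iff.mp h₁
  obtain ⟨hq₂, hs₂⟩ := memH_iff.mp h₂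
  refine memH_iff.mpr ⟨?_, ?_⟩
  · rw [gmul, toQuaternion_Qmat_mulVec]
    exact mul_mem hq₁ hq₂
  · rw [sVar_gmul, hs₁, hs₂, mulVec_zero, mulVec_zero, add_zero]

/-- H is a subgroup of (TS³, ·): it contains the identity, is closed under
inverses, and is closed under the group operation. -/
theorem stmt17 (lam : ℝ) (hlam : 0 < lam) :
    memH lam (one4, 0) ∧
    (∀ q p : Fin 4 → ℝ, memH lam (q, p) → memH lam (qconj q, qconj p)) ∧
    (∀ g₁ g₂ : (Fin 4 → ℝ) × (Fin 4 → ℝ),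
      memH lam g₁ → memH lam g₂ → memH lam (gmul lam g₁ g₂)) := by
  exact ⟨memH_one4 lam, fun _ _ => memH_qconj, fun _ _ => memH_gmul⟩
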